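/- Let ψ : ℝ³ → ℝ be continuous with ψ ≥ 0, let u : ℝ³ → ℝ be continuous, and let w ∈ C²(ℝ³) satisfy Δw = 3 ψ u² w on all of ℝ³. Suppose there exists a constant C > 0 such that |w(x)| ≤ C/|x| for all |x| ≥ 1. Then w ≡ 0 on ℝ³. -/

import Mathlib

/-- Partial derivative in the `i`-th coordinate direction. -/
noncomputable def pderiv' {d : ℕ} (i : Fin d) (f : EuclideanSpace ℝ (Fin d) → ℝ) :
    EuclideanSpace ℝ (Fin d) → ℝ :=
  fun x => fderiv ℝ f x (EuclideanSpace.single i 1)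

/-- The Laplacian `Δf = Σ_i ∂_i ∂_i f`. -/
noncomputable def lap {d : ℕ} (f : EuclideanSpace ℝ (Fin d) → ℝ) :
    EuclideanSpace ℝ (Fin d) → ℝ :=
  fun x => ∑ i : Fin d, pderiv' i (pderiv' i f) x

open Filter InnerProductSpace Laplacian Module Topology

/-!
This is the maximum principle. Where `w` is positive the equation gives `Δw ≥ 0`, and a function
that is subharmonic wherever it exceeds a level `c` is at most `c` on any compact set on whose
frontier it is at most `c`. If `c > 0`, decay at infinity makes `{w ≥ c}` compact, and `w = c` on
the frontier of that set; hence `w ≤ c` for every `c > 0`, so `w ≤ 0`. The equation is linear, so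
the same applies to `-w`.

At an interior maximum `Δw ≤ 0`, which contradicts only a strict inequality `Δw > 0`; adding
`ε ‖x‖ ^ 2`, whose Laplacian is a positive constant, supplies the strictness.
-/

section SecondDerivative

variable {E F : Type*} [NormedAddCommGroup E] [NormedSpace ℝ E]
  [NormedAddCommGroup F] [NormedSpace ℝ F] {x : E}

lemma fderiv_fderiv_apply_eq_iteratedFDeriv_two {f : E → F} (hf : ContDiffAt ℝ 2 f x) (u v : E) :
    fderiv ℝ (fun y => fderiv ℝ f y u) x v = iteratedFDeriv ℝ 2 f x ![v, u] := by
  have hf' : DifferentiableAt ℝ (fderiv ℝ f) x :=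
    (hf.fderiv_right (m := 1) le_rfl).differentiableAt one_ne_zero
  simp [iteratedFDeriv_two_apply, fderiv_clm_apply hf' (differentiableAt_const u)]

lemma hasDerivAt_comp_line {f : E → F} {v : E} {t : ℝ} (hf : DifferentiableAt ℝ f (x + t • v)) :
    HasDerivAt (fun s : ℝ => f (x + s • v)) (fderiv ℝ f (x + t • v) v) t := by
  have hline : HasDerivAt (fun s : ℝ => x + s • v) v t := by
    simpa using ((hasDerivAt_id t).smul_const v).const_add x
  exact hf.hasFDerivAt.comp_hasDerivAt t hline

lemma tendsto_line_nhds (x v : E) : Tendsto (fun t : ℝ => x + t • v) (𝓝 0) (𝓝 x) :=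
  Continuous.tendsto' (by fun_prop) 0 x (by simp)

lemma deriv_deriv_comp_line_zero {f : E → F} (hf : ContDiffAt ℝ 2 f x) (v : E) :
    deriv (deriv fun t : ℝ => f (x + t • v)) 0 = iteratedFDeriv ℝ 2 f x ![v, v] := by
  have hderiv : (deriv fun t : ℝ => f (x + t • v)) =ᶠ[𝓝 0] fun t => fderiv ℝ f (x + t • v) v := by
    filter_upwards [(tendsto_line_nhds x v).eventually (hf.eventually (by simp))] with t ht
    exact (hasDerivAt_comp_line (ht.differentiableAt two_ne_zero)).deriv
  have hf' : DifferentiableAt ℝ (fun y => fderiv ℝ f y v) (x + (0 : ℝ) • v) := by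
    rw [zero_smul, add_zero]
    exact ((hf.fderiv_right (m := 1) le_rfl).clm_apply contDiffAt_const).differentiableAt
      one_ne_zero
  rw [hderiv.deriv_eq, (hasDerivAt_comp_line hf').deriv, zero_smul, add_zero,
    fderiv_fderiv_apply_eq_iteratedFDeriv_two hf]

lemma deriv_deriv_nonpos_of_isLocalMax {g : ℝ → ℝ} {a : ℝ} (hg : ContinuousAt g a)
    (hmax : IsLocalMax g a) : deriv (deriv g) a ≤ 0 := by
  by_contra! hpos
  have hmin : IsLocalMin g a := isLocalMin_of_deriv_deriv_pos hpos hmax.deriv_eq_zero hg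
  have hconst : g =ᶠ[𝓝 a] fun _ => g a := by
    filter_upwards [hmax, hmin] with t hle hge using le_antisymm hle hge
  have hzero : deriv (deriv g) a = 0 := by simpa using hconst.deriv.deriv_eq
  exact hpos.ne' hzero

lemma iteratedFDeriv_two_nonpos_of_isLocalMax {f : E → ℝ} (hf : ContDiffAt ℝ 2 f x)
    (hmax : IsLocalMax f x) (v : E) : iteratedFDeriv ℝ 2 f x ![v, v] ≤ 0 := by
  rw [← deriv_deriv_comp_line_zero hf]
  refine deriv_deriv_nonpos_of_isLocalMax ?_ ?_
  · exact ContinuousAt.comp' (by simpa using hf.continuousAt) (by fun_prop)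
  · filter_upwards [(tendsto_line_nhds x v).eventually hmax] with t ht using by simpa using ht

end SecondDerivative

lemma lap_eq_laplacian {d : ℕ} {f : EuclideanSpace ℝ (Fin d) → ℝ} {x : EuclideanSpace ℝ (Fin d)}
    (hf : ContDiffAt ℝ 2 f x) : lap f x = Δ f x := by
  rw [laplacian_eq_iteratedFDeriv_orthonormalBasis f (EuclideanSpace.basisFun (Fin d) ℝ)]
  refine Finset.sum_congr rfl fun i _ => ?_
  rw [EuclideanSpace.basisFun_apply]
  exact fderiv_fderiv_apply_eq_iteratedFDeriv_two hf _ _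

lemma tendsto_cocompact_zero_of_norm_le_div_norm {E F : Type*}
    [SeminormedAddCommGroup E] [ProperSpace E] [SeminormedAddCommGroup F] {f : E → F} {C R : ℝ}
    (hf : ∀ x, R ≤ ‖x‖ → ‖f x‖ ≤ C / ‖x‖) : Tendsto f (cocompact E) (𝓝 0) := by
  have hnorm : Tendsto (norm : E → ℝ) (cocompact E) atTop := tendsto_norm_cocompact_atTop
  exact squeeze_zero_norm' ((hnorm.eventually_ge_atTop R).mono hf) (hnorm.const_div_atTop C)

section MaximumPrinciple

variable {E : Type*} [NormedAddCommGroup E] [InnerProductSpace ℝ E] [FiniteDimensional ℝ E]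

lemma laplacian_nonpos_of_isLocalMax {f : E → ℝ} {x : E} (hf : ContDiffAt ℝ 2 f x)
    (hmax : IsLocalMax f x) : Δ f x ≤ 0 := by
  rw [laplacian_eq_iteratedFDeriv_stdOrthonormalBasis]
  exact Finset.sum_nonpos fun i _ => iteratedFDeriv_two_nonpos_of_isLocalMax hf hmax _

lemma laplacian_norm_sq (x : E) : Δ (fun y : E => ‖y‖ ^ 2) x = 2 * finrank ℝ E := by
  have hsecond (v : E) : iteratedFDeriv ℝ 2 (fun y : E => ‖y‖ ^ 2) x ![v, v] = 2 * ‖v‖ ^ 2 := by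
    have hfirst (y : E) : fderiv ℝ (fun z : E => ‖z‖ ^ 2) y v = (2 • innerSL ℝ v) y := by
      simp [fderiv_norm_sq_apply, real_inner_comm]
    rw [← fderiv_fderiv_apply_eq_iteratedFDeriv_two (contDiff_norm_sq ℝ).contDiffAt]
    simp_rw [hfirst, ContinuousLinearMap.fderiv]
    simp
  simp [laplacian_eq_iteratedFDeriv_stdOrthonormalBasis, hsecond, mul_comm]

lemma laplacian_add_smul_norm_sq {f : E → ℝ} {x : E} (hf : ContDiffAt ℝ 2 f x) (ε : ℝ) :
    Δ (f + ε • fun y : E => ‖y‖ ^ 2) x = Δ f x + ε * (2 * finrank ℝ E) := by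
  have hsq : ContDiffAt ℝ 2 (fun y : E => ‖y‖ ^ 2) x := (contDiff_norm_sq ℝ).contDiffAt
  rw [hf.laplacian_add (f₂ := ε • fun y : E => ‖y‖ ^ 2) (hsq.const_smul ε),
    laplacian_smul ε hsq, laplacian_norm_sq, smul_eq_mul]

lemma le_of_laplacian_pos_of_le_on_frontier {K : Set E} (hK : IsCompact K) {f : E → ℝ} {M : ℝ}
    (hcont : ContinuousOn f K) (hf : ∀ x ∈ interior K, ContDiffAt ℝ 2 f x)
    (hΔ : ∀ x ∈ interior K, M < f x → 0 < Δ f x) (hM : ∀ x ∈ frontier K, f x ≤ M) :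
    ∀ x ∈ K, f x ≤ M := by
  intro x hx
  obtain ⟨y, hyK, hmax⟩ := hK.exists_isMaxOn ⟨x, hx⟩ hcont
  refine (hmax hx).trans ?_
  by_contra! hy
  have hyint : y ∈ interior K := by
    by_contra hyint
    exact hy.not_ge (hM y ⟨subset_closure hyK, hyint⟩)
  have hloc : IsLocalMax f y := hmax.isLocalMax (mem_interior_iff_mem_nhds.mp hyint)
  exact (hΔ y hyint hy).not_ge (laplacian_nonpos_of_isLocalMax (hf y hyint) hloc)

lemma le_of_laplacian_nonneg_of_le_on_frontier [Nontrivial E] {K : Set E} (hK : IsCompact K)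
    {f : E → ℝ} {M : ℝ} (hcont : ContinuousOn f K) (hf : ∀ x ∈ interior K, ContDiffAt ℝ 2 f x)
    (hΔ : ∀ x ∈ interior K, M < f x → 0 ≤ Δ f x) (hM : ∀ x ∈ frontier K, f x ≤ M) :
    ∀ x ∈ K, f x ≤ M := by
  intro x hx
  obtain ⟨R, hR⟩ : ∃ R, ∀ y ∈ K, ‖y‖ ≤ R := hK.isBounded.exists_norm_le
  have hperturbed (ε : ℝ) (hε : 0 < ε) : f x ≤ M + ε * R ^ 2 := by
    set g : E → ℝ := f + ε • fun y => ‖y‖ ^ 2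
    have hg (y : E) : g y = f y + ε * ‖y‖ ^ 2 := rfl
    have hfg (y : E) : f y ≤ g y := by rw [hg]; exact le_add_of_nonneg_right (by positivity)
    have hgf {y : E} (hy : y ∈ K) : g y ≤ f y + ε * R ^ 2 := by
      rw [hg]
      gcongr
      exact hR y hy
    refine (hfg x).trans <| le_of_laplacian_pos_of_le_on_frontier hK (by fun_prop) ?_ ?_ ?_ x hx
    · exact fun y hy => (hf y hy).add ((contDiff_norm_sq ℝ).contDiffAt.const_smul ε)
    · intro y hy hMy
      have hfy : M < f y := lt_of_add_lt_add_right (hMy.trans_le (hgf (interior_subset hy)))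
      rw [laplacian_add_smul_norm_sq (hf y hy)]
      have hdim : (0 : ℝ) < finrank ℝ E := mod_cast finrank_pos
      exact add_pos_of_nonneg_of_pos (hΔ y hy hfy) (by positivity)
    · exact fun y hy => (hgf (hK.isClosed.frontier_subset hy)).trans (by gcongr; exact hM y hy)
  have hlim : Tendsto (fun ε : ℝ => M + ε * R ^ 2) (𝓝[>] 0) (𝓝 M) :=
    tendsto_nhdsWithin_of_tendsto_nhds <| Continuous.tendsto' (by fun_prop) 0 M (by simp)
  exact ge_of_tendsto hlim (eventually_mem_nhdsWithin.mono hperturbed)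

lemma nonpos_of_laplacian_nonneg_of_tendsto_zero [Nontrivial E] {f : E → ℝ} (hf : ContDiff ℝ 2 f)
    (hΔ : ∀ x, 0 < f x → 0 ≤ Δ f x) (hlim : Tendsto f (cocompact E) (𝓝 0)) (x : E) : f x ≤ 0 := by
  refine le_of_forall_pos_le_add fun c hc => ?_
  rw [zero_add]
  by_contra! hx
  have hcompact : IsCompact {y | c ≤ f y} := by
    obtain ⟨K, hK, hKc⟩ := mem_cocompact.mp (hlim.eventually (eventually_lt_nhds hc))
    refine hK.of_isClosed_subset (isClosed_le continuous_const hf.continuous) ?_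
    intro y (hy : c ≤ f y)
    by_contra hyK
    exact (hKc hyK).not_ge hy
  have hfrontier : ∀ y ∈ frontier {y | c ≤ f y}, f y ≤ c := fun y hy =>
    (frontier_le_subset_eq continuous_const hf.continuous hy).ge
  exact hx.not_ge <| le_of_laplacian_nonneg_of_le_on_frontier hcompact hf.continuous.continuousOn
    (fun y _ => hf.contDiffAt) (fun y _ hy => hΔ y (hc.trans hy)) hfrontier x hx.le

theorem stmt12_general [Nontrivial E] {V w : E → ℝ} (hV : ∀ x, 0 ≤ V x) (hw : ContDiff ℝ 2 w)
    (heq : ∀ x, Δ w x = V x * w x) (hlim : Tendsto w (cocompact E) (𝓝 0)) (x : E) : w x = 0 := by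
  refine le_antisymm ?_ (neg_nonpos.mp ?_)
  · refine nonpos_of_laplacian_nonneg_of_tendsto_zero hw (fun y hy => ?_) hlim x
    rw [heq]
    exact mul_nonneg (hV y) hy.le
  · refine nonpos_of_laplacian_nonneg_of_tendsto_zero hw.neg (fun y hy => ?_)
      (by simpa using hlim.neg) x
    rw [← Pi.neg_def, laplacian_neg, Pi.neg_apply, heq, ← mul_neg]
    exact mul_nonneg (hV y) hy.le

end MaximumPrinciple

/-- A `C²` solution of `Δw = 3 ψ u² w` on `ℝ³` with `ψ ≥ 0` that decays like `C/|x|`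
at infinity vanishes identically. -/
theorem stmt12 (ψ u : EuclideanSpace ℝ (Fin 3) → ℝ)
    (hψc : Continuous ψ) (hψ0 : ∀ x, 0 ≤ ψ x) (hu : Continuous u)
    (w : EuclideanSpace ℝ (Fin 3) → ℝ) (hw : ContDiff ℝ 2 w)
    (heq : ∀ x, lap w x = 3 * ψ x * (u x) ^ 2 * w x)
    (C : ℝ) (hC : 0 < C)
    (hdecay : ∀ x : EuclideanSpace ℝ (Fin 3), 1 ≤ ‖x‖ → |w x| ≤ C / ‖x‖) :
    ∀ x, w x = 0 := by
  have hV (x) : 0 ≤ 3 * ψ x * u x ^ 2 := mul_nonneg (mul_nonneg zero_le_three (hψ0 x)) (sq_nonneg _)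
  exact stmt12_general hV hw (fun x => (lap_eq_laplacian hw.contDiffAt).symm.trans (heq x))
    (tendsto_cocompact_zero_of_norm_le_div_norm hdecay)
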